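/- There exists a constant C > 0 depending only on α such that for every u ∈ C^{1,2+α}([0,T]×ℝ) and every h ∈ C^α([0,T]×ℝ): [u]_{2+α} ≤ C·( [u_t + ½u_xx + h·u_x]_α + ⟨u(T,·)⟩_{2+α} + (1 + ‖h‖_α^{2+α})·‖u‖₀ ), where ⟨u(T,·)⟩_{2+α} denotes the α-Hölder constant of the second spatial derivative of the terminal slice x ↦ u(T,x). -/

import Mathlib

open Set Filter

noncomputable section

/-- The parabolic distance on `[0,T] × ℝ`:
`d_p((t₁,x₁),(t₂,x₂)) = √|t₁−t₂| + |x₁−x₂|`. -/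
def pd (t₁ x₁ t₂ x₂ : ℝ) : ℝ := Real.sqrt |t₁ - t₂| + |x₁ - x₂|

/-- Sup-norm `‖u‖₀` of `u` over `[0,T] × ℝ`. -/
def supN (T : ℝ) (u : ℝ → ℝ → ℝ) : ℝ :=
  sInf {M : ℝ | 0 ≤ M ∧ ∀ t ∈ Icc (0:ℝ) T, ∀ x : ℝ, |u t x| ≤ M}

/-- One-sided supremum `sup u` of `u` over `[0,T] × ℝ`. -/
def supU (T : ℝ) (u : ℝ → ℝ → ℝ) : ℝ :=
  sInf {M : ℝ | ∀ t ∈ Icc (0:ℝ) T, ∀ x : ℝ, u t x ≤ M}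

/-- The parabolic `α`-Hölder seminorm `[u]_α` of `u` over `[0,T] × ℝ`. -/
def hSemi (T α : ℝ) (u : ℝ → ℝ → ℝ) : ℝ :=
  sInf {K : ℝ | 0 ≤ K ∧ ∀ t₁ ∈ Icc (0:ℝ) T, ∀ t₂ ∈ Icc (0:ℝ) T, ∀ x₁ x₂ : ℝ,
    |u t₁ x₁ - u t₂ x₂| ≤ K * pd t₁ x₁ t₂ x₂ ^ α}

/-- The Hölder norm `‖u‖_α = ‖u‖₀ + [u]_α`. -/
def hNorm (T α : ℝ) (u : ℝ → ℝ → ℝ) : ℝ := supN T u + hSemi T α u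

/-- The weighted sup-norm `‖u‖_β = sup_{(t,x)} e^{−β(T−t)} |u(t,x)|`. -/
def wNorm (T β : ℝ) (u : ℝ → ℝ → ℝ) : ℝ :=
  sInf {M : ℝ | 0 ≤ M ∧ ∀ t ∈ Icc (0:ℝ) T, ∀ x : ℝ, Real.exp (-β * (T - t)) * |u t x| ≤ M}

/-- Membership in `C^α([0,T]×ℝ)`: bounded, continuous, with finite parabolic
`α`-Hölder constant. -/
def MemCa (T α : ℝ) (u : ℝ → ℝ → ℝ) : Prop :=
  ContinuousOn (fun p : ℝ × ℝ => u p.1 p.2) (Icc (0:ℝ) T ×ˢ (univ : Set ℝ)) ∧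
  (∃ M : ℝ, ∀ t ∈ Icc (0:ℝ) T, ∀ x : ℝ, |u t x| ≤ M) ∧
  (∃ K : ℝ, ∀ t₁ ∈ Icc (0:ℝ) T, ∀ t₂ ∈ Icc (0:ℝ) T, ∀ x₁ x₂ : ℝ,
    |u t₁ x₁ - u t₂ x₂| ≤ K * pd t₁ x₁ t₂ x₂ ^ α)

/-- Membership in `C^{1,2+α}([0,T]×ℝ)`: `u ∈ C^α`, and the partial derivatives
`u_t`, `u_x`, `u_xx` exist on `(0,T) × ℝ` and are (extended to) the `C^α` functions
`ut`, `ux`, `uxx`. -/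
structure MemC12a (T α : ℝ) (u ut ux uxx : ℝ → ℝ → ℝ) : Prop where
  memU : MemCa T α u
  memUt : MemCa T α ut
  memUx : MemCa T α ux
  memUxx : MemCa T α uxx
  hasUt : ∀ t ∈ Ioo (0:ℝ) T, ∀ x : ℝ, HasDerivAt (fun s => u s x) (ut t x) t
  hasUx : ∀ t ∈ Ioo (0:ℝ) T, ∀ x : ℝ, HasDerivAt (fun y => u t y) (ux t x) x
  hasUxx : ∀ t ∈ Ioo (0:ℝ) T, ∀ x : ℝ, HasDerivAt (fun y => ux t y) (uxx t x) x

/-- Sup-norm `‖g‖₀` of a function `g : ℝ → ℝ`. -/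
def gSupN (g : ℝ → ℝ) : ℝ := sInf {M : ℝ | 0 ≤ M ∧ ∀ x : ℝ, |g x| ≤ M}

/-- `α`-Hölder constant of a function `g : ℝ → ℝ`. -/
def gHSemi (α : ℝ) (g : ℝ → ℝ) : ℝ :=
  sInf {K : ℝ | 0 ≤ K ∧ ∀ x y : ℝ, |g x - g y| ≤ K * |x - y| ^ α}

/-- Membership in `C^{2+α}(ℝ)`: twice continuously differentiable, with `g`, `g'`, `g''`
bounded and `g''` `α`-Hölder. -/
def MemC2a (α : ℝ) (g : ℝ → ℝ) : Prop :=
  ContDiff ℝ 2 g ∧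
  (∃ M : ℝ, ∀ x : ℝ, |g x| ≤ M ∧ |deriv g x| ≤ M ∧ |deriv (deriv g) x| ≤ M) ∧
  (∃ K : ℝ, ∀ x y : ℝ, |deriv (deriv g) x - deriv (deriv g) y| ≤ K * |x - y| ^ α)

/-- The `C^{2+α}(ℝ)` norm: `‖g‖_{2+α} = ‖g‖₀ + ‖g'‖₀ + ‖g''‖₀ + [g'']_α`. -/
def gNorm2a (α : ℝ) (g : ℝ → ℝ) : ℝ :=
  gSupN g + gSupN (deriv g) + gSupN (deriv (deriv g)) + gHSemi α (deriv (deriv g))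

lemma sd_bound (g g' g'' : ℝ → ℝ) (hg : ∀ x, HasDerivAt g (g' x) x)
    (hg' : ∀ x, HasDerivAt g' (g'' x) x) (x ε M : ℝ) (hε : 0 ≤ ε)
    (hM : ∀ z ∈ Icc (x - ε) (x + ε), |g'' z| ≤ M) :
    |g (x + ε) - 2 * g x + g (x - ε)| ≤ ε ^ 2 * M := by
  have h1 : ∀ z ∈ Icc x (x + ε), |g' z - g' (z - ε)| ≤ M * ε := by
    intro z hz
    have := Convex.norm_image_sub_le_of_norm_hasDerivWithin_le (f := g') (f' := g'')
      (s := Icc (x - ε) (x + ε)) (C := M) (x := z - ε) (y := z)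
      (fun y _ => (hg' y).hasDerivWithinAt) hM (convex_Icc _ _)
      ⟨by linarith [hz.1], by linarith [hz.2]⟩ ⟨by linarith [hz.1], by linarith [hz.2]⟩
    simpa [Real.norm_eq_abs, abs_of_nonneg hε] using this
  have := Convex.norm_image_sub_le_of_norm_hasDerivWithin_le (f := fun z => g z - g (z - ε))
      (f' := fun z => g' z - g' (z - ε))
      (s := Icc x (x + ε)) (C := M * ε) (x := x) (y := x + ε)
      (fun y _ => by
        have h2 : HasDerivAt (fun z => g (z - ε)) (g' (y - ε)) y := (hg (y - ε)).comp_sub_const y ε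
        exact ((hg y).sub h2).hasDerivWithinAt) h1 (convex_Icc _ _)
      ⟨by linarith, by linarith⟩ ⟨by linarith, by linarith⟩
  simp only [Real.norm_eq_abs, add_sub_cancel_left, abs_of_nonneg hε, add_sub_cancel_right] at this
  calc _ = |g (x + ε) - g x - (g x - g (x - ε))| := by congr 1; ring
    _ ≤ _ := this
    _ = _ := by ring

lemma max_strict (t0 t1 R : ℝ) (ht : t0 ≤ t1) (hR : 0 ≤ R) (w wt wy wyy : ℝ → ℝ → ℝ)
    (hc : ContinuousOn (fun p : ℝ × ℝ => w p.1 p.2) (Icc t0 t1 ×ˢ Icc 0 R))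
    (h1 : ∀ s ∈ Ico t0 t1, ∀ y, HasDerivAt (fun s => w s y) (wt s y) s)
    (h2 : ∀ s ∈ Ico t0 t1, ∀ y, HasDerivAt (fun y => w s y) (wy s y) y)
    (h3 : ∀ s ∈ Ico t0 t1, ∀ y, HasDerivAt (fun y => wy s y) (wyy s y) y)
    (hpos : ∀ s ∈ Ico t0 t1, ∀ y ∈ Ioo 0 R, 0 < wt s y + 1/2 * wyy s y)
    (hb1 : ∀ y ∈ Icc 0 R, w t1 y ≤ 0)
    (hb2 : ∀ s ∈ Ico t0 t1, w s 0 ≤ 0)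
    (hb3 : ∀ s ∈ Ico t0 t1, w s R ≤ 0) :
    ∀ s ∈ Icc t0 t1, ∀ y ∈ Icc 0 R, w s y ≤ 0 := by
  have hcomp : IsCompact (Icc t0 t1 ×ˢ Icc 0 R) := isCompact_Icc.prod isCompact_Icc
  obtain ⟨⟨s, y⟩, hm, hmax⟩ := hcomp.exists_isMaxOn ⟨(t0, 0), by simp [ht, hR]⟩ hc
  suffices hle : w s y ≤ 0 by
    intro s' hs' y' hy'
    exact (hmax (show (s', y') ∈ _ from ⟨hs', hy'⟩)).trans hle
  obtain ⟨hs, hy⟩ := hm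
  simp only at hs hy
  rcases eq_or_lt_of_le hs.2 with h | hs1
  · rw [h]; exact hb1 y hy
  have hsI : s ∈ Ico t0 t1 := ⟨hs.1, hs1⟩
  rcases eq_or_lt_of_le hy.1 with h | hy0
  · rw [← h]; exact hb2 s hsI
  rcases eq_or_lt_of_le hy.2 with h | hyR
  · rw [h]; exact hb3 s hsI
  exfalso
  have hp := hpos s hsI y ⟨hy0, hyR⟩
  have hmaxy : IsLocalMax (fun y => w s y) y := by
    filter_upwards [Ioo_mem_nhds hy0 hyR] with z hz
    exact hmax (show (s, z) ∈ _ from ⟨hs, hz.1.le, hz.2.le⟩)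
  have hwt : wt s y ≤ 0 := by
    by_contra hcon
    push Not at hcon
    have hd := (h1 s hsI y).hasDerivWithinAt (s := Ioi s)
    rw [hasDerivWithinAt_iff_tendsto_slope' (by simp)] at hd
    have e1 := hd.eventually (lt_mem_nhds hcon)
    have e2 : ∀ᶠ z in nhdsWithin s (Ioi s), z ∈ Ioo s t1 := Ioo_mem_nhdsGT hs1
    obtain ⟨z, hz1, hz2⟩ := (e1.and e2).exists
    have : w z y ≤ w s y := hmax (show (z, y) ∈ _ from ⟨⟨hs.1.trans hz2.1.le, hz2.2.le⟩, hy⟩)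
    rw [slope_def_field] at hz1
    have : (w z y - w s y) / (z - s) ≤ 0 :=
      div_nonpos_of_nonpos_of_nonneg (by linarith) (by linarith [hz2.1])
    linarith
  have hwyy : wyy s y ≤ 0 := by
    by_contra hcon
    push Not at hcon
    have hd0 : wy s y = 0 := hmaxy.hasDerivAt_eq_zero (h2 s hsI y)
    have hderiv : deriv (fun y => w s y) = wy s := by
      ext z; exact (h2 s hsI z).deriv
    have hdd : deriv (deriv (fun y => w s y)) y = wyy s y := by
      rw [hderiv]; exact (h3 s hsI y).deriv
    have hmin := isLocalMin_of_deriv_deriv_pos (f := fun y => w s y) (x₀ := y) (by rw [hdd]; exact hcon)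
      (by rw [hderiv]; exact hd0) (h2 s hsI y).continuousAt
    have hconst : (fun y => w s y) =ᶠ[nhds y] fun _ => w s y := by
      filter_upwards [hmin, hmaxy] with z ha hb
      exact le_antisymm hb ha
    have hd1 := hconst.deriv.deriv.eq_of_nhds
    rw [hdd] at hd1
    simp at hd1
    linarith
  linarith

lemma max_weak (t0 t1 R : ℝ) (ht : t0 ≤ t1) (hR : 0 ≤ R) (w wt wy wyy : ℝ → ℝ → ℝ)
    (hc : ContinuousOn (fun p : ℝ × ℝ => w p.1 p.2) (Icc t0 t1 ×ˢ Icc 0 R))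
    (h1 : ∀ s ∈ Ico t0 t1, ∀ y, HasDerivAt (fun s => w s y) (wt s y) s)
    (h2 : ∀ s ∈ Ico t0 t1, ∀ y, HasDerivAt (fun y => w s y) (wy s y) y)
    (h3 : ∀ s ∈ Ico t0 t1, ∀ y, HasDerivAt (fun y => wy s y) (wyy s y) y)
    (hpos : ∀ s ∈ Ico t0 t1, ∀ y ∈ Ioo 0 R, 0 ≤ wt s y + 1/2 * wyy s y)
    (hb1 : ∀ y ∈ Icc 0 R, w t1 y ≤ 0)
    (hb2 : ∀ s ∈ Ico t0 t1, w s 0 ≤ 0)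
    (hb3 : ∀ s ∈ Ico t0 t1, w s R ≤ 0) :
    ∀ s ∈ Icc t0 t1, ∀ y ∈ Icc 0 R, w s y ≤ 0 := by
  intro s hs y hy
  have key : ∀ η > 0, w s y ≤ η * (t1 - s) := by
    intro η hη
    have := max_strict t0 t1 R ht hR (fun s y => w s y + η * (s - t1)) (fun s y => wt s y + η)
      wy wyy (hc.add (by fun_prop))
      (fun s hs y => by
        have := (h1 s hs y).add (((hasDerivAt_id s).sub_const t1).const_mul η)
        rw [mul_one] at this
        exact this)
      (fun s hs y => (h2 s hs y).add_const _) h3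
      (fun s hs y hy => by linarith [hpos s hs y hy])
      (fun y hy => by simpa using hb1 y hy)
      (fun s hs => by nlinarith [hb2 s hs, hs.2])
      (fun s hs => by nlinarith [hb3 s hs, hs.2]) s hs y hy
    linarith
  by_contra hcon
  push Not at hcon
  have h0 : 0 ≤ t1 - s := by linarith [hs.2]
  have := key (w s y / (2 * (t1 - s + 1))) (by positivity)
  have h4 : w s y / (2 * (t1 - s + 1)) * (t1 - s) ≤ w s y / 2 := by
    rw [div_mul_eq_mul_div, div_le_div_iff₀ (by positivity) (by positivity)]
    nlinarith
  linarith

def SD (ε : ℝ) (g : ℝ → ℝ) (x : ℝ) : ℝ := g (x + ε) - 2 * g x + g (x - ε)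

lemma SD_hasDeriv (ε : ℝ) (g g' : ℝ → ℝ) (hg : ∀ x, HasDerivAt g (g' x) x) (x : ℝ) :
    HasDerivAt (SD ε g) (SD ε g' x) x := by
  have h1 := (hg (x + ε)).comp_add_const x ε
  have h2 := (hg (x - ε)).comp_sub_const x ε
  exact (h1.sub ((hg x).const_mul 2)).add h2

lemma SD_diff (g g' g'' : ℝ → ℝ) (hg : ∀ x, HasDerivAt g (g' x) x)
    (hg' : ∀ x, HasDerivAt g' (g'' x) x) (x x' ε M : ℝ) (hε : 0 ≤ ε)
    (hM : ∀ z, |g'' (x + z) - g'' (x' + z)| ≤ M) :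
    |SD ε g x - SD ε g x'| ≤ ε ^ 2 * M := by
  have := sd_bound (fun z => g (x + z) - g (x' + z)) (fun z => g' (x + z) - g' (x' + z))
    (fun z => g'' (x + z) - g'' (x' + z))
    (fun z => ((hg _).comp_const_add x z).sub ((hg _).comp_const_add x' z))
    (fun z => ((hg' _).comp_const_add x z).sub ((hg' _).comp_const_add x' z)) 0 ε M hε
    (fun z _ => hM z)
  unfold SD
  simp only [zero_add, add_zero, zero_sub] at this
  calc _ = _ := by congr 1; simp only [sub_eq_add_neg]; ring
    _ ≤ _ := this

lemma SD_approx (g g' g'' : ℝ → ℝ) (hg : ∀ x, HasDerivAt g (g' x) x)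
    (hg' : ∀ x, HasDerivAt g' (g'' x) x) (x ε M : ℝ) (hε : 0 ≤ ε)
    (hM : ∀ z ∈ Icc (x - ε) (x + ε), |g'' z - g'' x| ≤ M) :
    |SD ε g x - ε ^ 2 * g'' x| ≤ ε ^ 2 * M := by
  have := sd_bound (fun z => g z - g'' x / 2 * (z - x) ^ 2) (fun z => g' z - g'' x * (z - x))
    (fun z => g'' z - g'' x)
    (fun z => by
      have h := (((hasDerivAt_id z).sub_const x).pow 2).const_mul (g'' x / 2)
      refine ((hg z).sub h).congr_deriv ?_
      simp; ring)
    (fun z => by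
      have h := ((hasDerivAt_id z).sub_const x).const_mul (g'' x)
      refine ((hg' z).sub h).congr_deriv ?_
      simp) x ε M hε hM
  unfold SD
  calc _ = _ := by congr 1; ring
    _ ≤ _ := this

lemma SD_terminal (T α G ε : ℝ) (hT : 0 < T) (hα0 : 0 < α) (u ut ux uxx : ℝ → ℝ → ℝ)
    (hm : MemC12a T α u ut ux uxx) (hG : ∀ x y, |uxx T x - uxx T y| ≤ G * |x - y| ^ α)
    (hε : 0 ≤ ε) (x x' : ℝ) :
    |SD ε (u T) x - SD ε (u T) x'| ≤ ε ^ 2 * (G * |x - x'| ^ α) := by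
  obtain ⟨-, -, K, hK⟩ := hm.memUxx
  have hTT : T ∈ Icc 0 T := ⟨hT.le, le_refl _⟩
  have hcu : ∀ z, Tendsto (fun t => u t z) (nhdsWithin T (Ioo 0 T)) (nhds (u T z)) := by
    intro z
    have h1 := hm.memU.1 (T, z) ⟨hTT, trivial⟩
    have h2 : Tendsto (fun t : ℝ => (t, z)) (nhdsWithin T (Ioo 0 T))
        (nhdsWithin (T, z) (Icc 0 T ×ˢ univ)) := by
      apply tendsto_nhdsWithin_of_tendsto_nhds_of_eventually_within
      · exact tendsto_nhdsWithin_of_tendsto_nhds (Continuous.tendsto (by fun_prop) T)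
      · filter_upwards [self_mem_nhdsWithin] with t ht
        exact ⟨⟨ht.1.le, ht.2.le⟩, trivial⟩
    exact h1.tendsto.comp h2
  have hlhs : Tendsto (fun t => |SD ε (u t) x - SD ε (u t) x'|) (nhdsWithin T (Ioo 0 T))
      (nhds |SD ε (u T) x - SD ε (u T) x'|) := by
    unfold SD
    exact ((((hcu _).sub ((hcu _).const_mul 2)).add (hcu _)).sub
      (((hcu _).sub ((hcu _).const_mul 2)).add (hcu _))).abs
  have hrhs : Tendsto (fun t => ε ^ 2 * (G * |x - x'| ^ α + 2 * K * (Real.sqrt |t - T|) ^ α))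
      (nhdsWithin T (Ioo 0 T)) (nhds (ε ^ 2 * (G * |x - x'| ^ α))) := by
    apply tendsto_nhdsWithin_of_tendsto_nhds
    have : Continuous (fun t : ℝ => ε ^ 2 * (G * |x - x'| ^ α + 2 * K * (Real.sqrt |t - T|) ^ α)) := by
      have : Continuous (fun t : ℝ => (Real.sqrt |t - T|) ^ α) :=
        Continuous.rpow_const (by fun_prop) (fun _ => Or.inr hα0.le)
      fun_prop
    have h := this.tendsto T
    simpa [Real.zero_rpow hα0.ne'] using h
  have : (nhdsWithin T (Ioo 0 T)).NeBot := by
    rw [← mem_closure_iff_nhdsWithin_neBot, closure_Ioo hT.ne]; exact hTT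
  refine le_of_tendsto_of_tendsto hlhs hrhs ?_
  filter_upwards [self_mem_nhdsWithin] with t ht
  refine SD_diff (u t) (ux t) (uxx t) (hm.hasUx t ht) (hm.hasUxx t ht) x x' ε _ hε ?_
  intro z
  have a1 := hK t ⟨ht.1.le, ht.2.le⟩ T hTT (x + z) (x + z)
  have a2 := hK t ⟨ht.1.le, ht.2.le⟩ T hTT (x' + z) (x' + z)
  have a3 := hG (x + z) (x' + z)
  simp only [pd, sub_self, abs_zero, add_zero, add_sub_add_right_eq_sub] at a1 a2 a3
  rw [abs_le] at *
  constructor <;> linarith [a1.1, a1.2, a2.1, a2.2, a3.1, a3.2]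

lemma barrier (t0 t1 R A M L0 L1 : ℝ) (ht : t0 ≤ t1) (hR : 0 < R) (hA : 0 ≤ A) (hM0 : 0 ≤ M)
    (hL0 : 0 ≤ L0) (hL1 : 0 ≤ L1) (w wt wy wyy : ℝ → ℝ → ℝ)
    (hc : ContinuousOn (fun p : ℝ × ℝ => w p.1 p.2) (Icc t0 t1 ×ˢ Icc 0 R))
    (h1 : ∀ s ∈ Ico t0 t1, ∀ y, HasDerivAt (fun s => w s y) (wt s y) s)
    (h2 : ∀ s ∈ Ico t0 t1, ∀ y, HasDerivAt (fun y => w s y) (wy s y) y)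
    (h3 : ∀ s ∈ Ico t0 t1, ∀ y, HasDerivAt (fun y => wy s y) (wyy s y) y)
    (hM : ∀ s ∈ Ico t0 t1, ∀ y ∈ Ioo 0 R, -M ≤ wt s y + 1/2 * wyy s y)
    (hb1 : (t1 = t0 + R ^ 2 ∧ ∀ y ∈ Icc 0 R, w t1 y ≤ A) ∨ ∀ y ∈ Icc 0 R, w t1 y ≤ L0 + L1 * y)
    (hb2 : ∀ s ∈ Ico t0 t1, w s 0 ≤ 0)
    (hb3 : ∀ s ∈ Ico t0 t1, w s R ≤ A) :
    ∀ y ∈ Icc 0 R, w t0 y ≤ A * (y / R) ^ 2 + (2 * A / R ^ 2 + M) * (y * R) + L0 + L1 * y := by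
  set K := 2 * A / R ^ 2 + M with hK
  have hK0 : 0 ≤ K := by positivity
  have hAR : A / R ^ 2 * R ^ 2 = A := by field_simp
  have hAR0 : 0 ≤ A / R ^ 2 := by positivity
  have hKA : K = 2 * (A / R ^ 2) + M := by rw [hK]; ring
  set a := A / R ^ 2 with ha
  have key := max_weak t0 t1 R ht hR.le
    (fun s y => w s y - (a * (y ^ 2 + (s - t0)) + K * (y * R - y ^ 2) + L0 + L1 * y))
    (fun s y => wt s y - a) (fun s y => wy s y - (a * (2 * y) + K * (R - 2 * y) + L1))
    (fun s y => wyy s y - (a * 2 - K * 2))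
    (hc.sub (by fun_prop))
    (fun s hs y => by
      have h : HasDerivAt (fun s => a * (y ^ 2 + (s - t0)) + K * (y * R - y ^ 2) + L0 + L1 * y) (a * 1) s :=
        (((((hasDerivAt_id s).sub_const t0).const_add (y ^ 2)).const_mul a).add_const _).add_const _
          |>.add_const _
      rw [mul_one] at h
      exact (h1 s hs y).sub h)
    (fun s hs y => by
      have hy := hasDerivAt_id' y
      have h : HasDerivAt (fun y => a * (y ^ 2 + (s - t0)) + K * (y * R - y ^ 2) + L0 + L1 * y)
          (a * (2 * y) + K * (R - 2 * y) + L1) y := by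
        have := (((((hy.pow 2).add_const (s - t0)).const_mul a).add
          (((hy.mul_const R).sub (hy.pow 2)).const_mul K)).add_const L0).add (hy.const_mul L1)
        refine this.congr_deriv ?_
        simp
      exact (h2 s hs y).sub h)
    (fun s hs y => by
      have hy := hasDerivAt_id' y
      have h : HasDerivAt (fun y => a * (2 * y) + K * (R - 2 * y) + L1) (a * 2 - K * 2) y := by
        have := (((hy.const_mul 2).const_mul a).add
          (((hy.const_mul 2).const_sub R).const_mul K)).add_const L1
        refine this.congr_deriv ?_
        ring
      exact (h3 s hs y).sub h)
    (fun s hs y hy => by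
      have := hM s hs y hy
      linarith)
    (fun y hy => by
      have e1 : 0 ≤ K * (y * R - y ^ 2) := mul_nonneg hK0 (by nlinarith [hy.1, hy.2])
      have e2 : 0 ≤ L1 * y := mul_nonneg hL1 hy.1
      have e3 : 0 ≤ a * y ^ 2 := by positivity
      have e4 : 0 ≤ a * (t1 - t0) := mul_nonneg hAR0 (by linarith)
      rcases hb1 with ⟨h, hb⟩ | hb
      · have := hb y hy
        have e5 : a * (t1 - t0) = A := by rw [← hAR, h]; ring
        linarith
      · have := hb y hy
        linarith)
    (fun s hs => by
      have := hb2 s hs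
      have e4 : 0 ≤ a * (s - t0) := mul_nonneg hAR0 (by linarith [hs.1])
      simp only [ne_eq, OfNat.ofNat_ne_zero, not_false_eq_true, zero_pow, zero_add, zero_mul, sub_self, mul_zero]
      linarith)
    (fun s hs => by
      have := hb3 s hs
      have e4 : 0 ≤ a * (s - t0) := mul_nonneg hAR0 (by linarith [hs.1])
      have e2 : 0 ≤ L1 * R := mul_nonneg hL1 hR.le
      have e5 : K * (R * R - R ^ 2) = 0 := by ring
      linarith)
  intro y hy
  have := key t0 ⟨le_refl _, ht⟩ y hy
  have e1 : A * (y / R) ^ 2 = a * y ^ 2 := by rw [ha]; field_simp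
  have e2 : 0 ≤ K * y ^ 2 := by positivity
  rw [e1]
  nlinarith

set_option maxHeartbeats 1000000 in
lemma core_step (T α U F G κ N : ℝ) (hT : 0 < T) (hα0 : 0 < α) (hα1 : α < 1)
    (hU0 : 0 ≤ U) (hF0 : 0 ≤ F) (hG0 : 0 ≤ G) (hκ : 0 < κ) (hN : 1 ≤ N)
    (u ut ux uxx : ℝ → ℝ → ℝ) (hm : MemC12a T α u ut ux uxx)
    (hU : ∀ t ∈ Ioo 0 T, ∀ x y, |uxx t x - uxx t y| ≤ U * |x - y| ^ α)
    (hF : ∀ t ∈ Ioo 0 T, ∀ x y, |(ut t x + 1/2 * uxx t x) - (ut t y + 1/2 * uxx t y)|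
      ≤ F * |x - y| ^ α)
    (hG : ∀ x y, |uxx T x - uxx T y| ≤ G * |x - y| ^ α)
    (σ : ℝ) (hσ : |σ| = 1) (t0 : ℝ) (ht0 : t0 ∈ Ioo 0 T) (x0 ρ : ℝ) (hρ : 0 < ρ) :
    σ * (uxx t0 (x0 + ρ / 2) - uxx t0 (x0 - ρ / 2)) ≤
      (2 * κ ^ α * U + 2 * (2 * N) ^ α / N * U + 2 * N * κ ^ α / κ ^ 2 * F + 3 * G) * ρ ^ α := by
  set ε := κ * ρ with hεd
  set R := N * ρ with hRd
  have hε : 0 < ε := by positivity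
  have hNp : 0 < N := by linarith
  have hR : 0 < R := by positivity
  set D : ℝ → ℝ → ℝ := fun t x => SD ε (u t) x with hD
  set w : ℝ → ℝ → ℝ := fun t y => σ * (SD ε (u t) (x0 + y) - SD ε (u t) (x0 - y)) with hw
  have hsig : ∀ z B, |z| ≤ B → σ * z ≤ B := by
    intro z B h
    calc σ * z ≤ |σ * z| := le_abs_self _
      _ = |z| := by rw [abs_mul, hσ, one_mul]
      _ ≤ B := h
  have habs : ∀ y : ℝ, 0 ≤ y → |x0 + y - (x0 - y)| = 2 * y := by
    intro y hy
    rw [show x0 + y - (x0 - y) = 2 * y by ring, abs_of_nonneg (by linarith)]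
  -- interior bound
  have hwU : ∀ t ∈ Ioo 0 T, ∀ y, 0 ≤ y → w t y ≤ ε ^ 2 * (U * (2 * y) ^ α) := by
    intro t ht y hy
    apply hsig
    refine SD_diff (u t) (ux t) (uxx t) (hm.hasUx t ht) (hm.hasUxx t ht) _ _ ε _ hε.le ?_
    intro z
    have := hU t ht (x0 + y + z) (x0 - y + z)
    rwa [add_sub_add_right_eq_sub, habs y hy] at this
  have hwA : ∀ t ∈ Ioo 0 T, ∀ y ∈ Icc 0 R, w t y ≤ ε ^ 2 * (U * (2 * R) ^ α) := by
    intro t ht y hy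
    refine (hwU t ht y hy.1).trans ?_
    have := Real.rpow_le_rpow (by linarith [hy.1]) (show 2 * y ≤ 2 * R by linarith [hy.2]) hα0.le
    gcongr
  have h2α : (2:ℝ) ^ α ≤ 2 := by
    calc (2:ℝ) ^ α ≤ 2 ^ (1:ℝ) := Real.rpow_le_rpow_of_exponent_le (by norm_num) hα1.le
      _ = 2 := by norm_num
  have hwT : ∀ y, 0 ≤ y → w T y ≤ ε ^ 2 * (2 * G * ρ ^ α) + ε ^ 2 * (2 * G * ρ ^ α / ρ) * y := by
    intro y hy
    have h1 : w T y ≤ ε ^ 2 * (G * (2 * y) ^ α) := by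
      apply hsig
      have := SD_terminal T α G ε hT hα0 u ut ux uxx hm hG hε.le (x0 + y) (x0 - y)
      rwa [habs y hy] at this
    have h2 : y ^ α ≤ ρ ^ α + ρ ^ α / ρ * y := by
      rcases le_total y ρ with h | h
      · have e1 := Real.rpow_le_rpow hy h hα0.le
        have e2 : 0 ≤ ρ ^ α / ρ * y := by positivity
        linarith
      · have e0 : (y / ρ) ^ α ≤ y / ρ := by
          have h1 : 1 ≤ y / ρ := by rwa [le_div_iff₀ hρ, one_mul]
          calc (y / ρ) ^ α ≤ (y / ρ) ^ (1:ℝ) := Real.rpow_le_rpow_of_exponent_le h1 hα1.le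
            _ = _ := Real.rpow_one _
        rw [Real.div_rpow hy hρ.le] at e0
        have e1 : 0 < ρ ^ α := by positivity
        rw [div_le_iff₀ e1] at e0
        have : y / ρ * ρ ^ α = ρ ^ α / ρ * y := by ring
        linarith
    have h3 : (2 * y) ^ α ≤ 2 * (ρ ^ α + ρ ^ α / ρ * y) := by
      rw [Real.mul_rpow (by norm_num) hy]
      have : 0 ≤ y ^ α := by positivity
      nlinarith
    calc w T y ≤ ε ^ 2 * (G * (2 * y) ^ α) := h1
      _ ≤ ε ^ 2 * (G * (2 * (ρ ^ α + ρ ^ α / ρ * y))) := by gcongr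
      _ = _ := by ring
  obtain ⟨t1, ht1a, ht1T, hcase⟩ : ∃ t1, t0 ≤ t1 ∧ t1 ≤ T ∧ ((t1 = t0 + R ^ 2 ∧ t1 < T) ∨ t1 = T) := by
    rcases lt_or_ge (t0 + R ^ 2) T with h | h
    · exact ⟨t0 + R ^ 2, by nlinarith, h.le, Or.inl ⟨rfl, h⟩⟩
    · exact ⟨T, ht0.2.le, le_refl _, Or.inr rfl⟩
  have hI : ∀ s ∈ Ico t0 t1, s ∈ Ioo 0 T := fun s hs => ⟨ht0.1.trans_le hs.1, hs.2.trans_le ht1T⟩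
  have hcu : ∀ c : ℝ × ℝ → ℝ, Continuous c →
      ContinuousOn (fun p : ℝ × ℝ => u p.1 (c p)) (Icc t0 t1 ×ˢ Icc 0 R) := by
    intro c hc
    refine hm.memU.1.comp (f := fun p : ℝ × ℝ => (p.1, c p)) (by fun_prop) ?_
    intro p hp
    exact ⟨⟨ht0.1.le.trans hp.1.1, hp.1.2.trans ht1T⟩, trivial⟩
  have key := barrier t0 t1 R (ε ^ 2 * (U * (2 * R) ^ α)) (4 * F * ε ^ α) (ε ^ 2 * (2 * G * ρ ^ α))
    (ε ^ 2 * (2 * G * ρ ^ α / ρ)) ht1a hR (by positivity) (by positivity) (by positivity) (by positivity)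
    w (fun t y => σ * (SD ε (ut t) (x0 + y) - SD ε (ut t) (x0 - y)))
    (fun t y => σ * (SD ε (ux t) (x0 + y) + SD ε (ux t) (x0 - y)))
    (fun t y => σ * (SD ε (uxx t) (x0 + y) - SD ε (uxx t) (x0 - y)))
    (by
      simp only [hw, SD]
      have a1 := hcu (fun p => x0 + p.2 + ε) (by fun_prop)
      have a2 := hcu (fun p => x0 + p.2) (by fun_prop)
      have a3 := hcu (fun p => x0 + p.2 - ε) (by fun_prop)
      have a4 := hcu (fun p => x0 - p.2 + ε) (by fun_prop)
      have a5 := hcu (fun p => x0 - p.2) (by fun_prop)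
      have a6 := hcu (fun p => x0 - p.2 - ε) (by fun_prop)
      exact continuousOn_const.mul (((a1.sub (continuousOn_const.mul a2)).add a3).sub
        ((a4.sub (continuousOn_const.mul a5)).add a6)))
    (fun s hs y => by
      have hd := hm.hasUt s (hI s hs)
      simp only [hw, SD]
      exact ((((hd _).sub ((hd _).const_mul 2)).add (hd _)).sub
        (((hd _).sub ((hd _).const_mul 2)).add (hd _))).const_mul σ)
    (fun s hs y => by
      have hd := SD_hasDeriv ε (u s) (ux s) (hm.hasUx s (hI s hs))
      have := (((hd (x0 + y)).comp_const_add x0 y).sub ((hd (x0 - y)).comp_const_sub x0 y)).const_mul σ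
      refine this.congr_deriv ?_
      ring)
    (fun s hs y => by
      have hd := SD_hasDeriv ε (ux s) (uxx s) (hm.hasUxx s (hI s hs))
      have := (((hd (x0 + y)).comp_const_add x0 y).add ((hd (x0 - y)).comp_const_sub x0 y)).const_mul σ
      refine this.congr_deriv ?_
      ring)
    (fun s hs y hy => by
      have hf := hF s (hI s hs)
      set f : ℝ → ℝ := fun x => ut s x + 1/2 * uxx s x with hfd
      have hSD : ∀ x, |SD ε f x| ≤ 2 * F * ε ^ α := by
        intro x
        have e1 := hf (x + ε) x
        have e2 := hf (x - ε) x
        rw [add_sub_cancel_left, abs_of_pos hε] at e1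
        rw [show x - ε - x = -ε by ring, abs_neg, abs_of_pos hε] at e2
        unfold SD
        simp only [hfd]
        rw [abs_le] at *
        constructor <;> linarith [e1.1, e1.2, e2.1, e2.2]
      have h1 : |SD ε f (x0 - y) - SD ε f (x0 + y)| ≤ 4 * F * ε ^ α := by
        have e1 := hSD (x0 - y)
        have e2 := hSD (x0 + y)
        rw [abs_le] at *
        constructor <;> linarith [e1.1, e1.2, e2.1, e2.2]
      have h2 := hsig _ _ h1
      have h3 : σ * (SD ε (ut s) (x0 + y) - SD ε (ut s) (x0 - y)) +
          1/2 * (σ * (SD ε (uxx s) (x0 + y) - SD ε (uxx s) (x0 - y)))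
          = - (σ * (SD ε f (x0 - y) - SD ε f (x0 + y))) := by
        simp only [SD, hfd]; ring
      rw [h3]
      linarith)
    (by
      rcases hcase with ⟨h, hlt⟩ | h
      · left
        exact ⟨h, fun y hy => hwA t1 ⟨ht0.1.trans_le ht1a, hlt⟩ y hy⟩
      · right
        intro y hy
        rw [h]
        exact hwT y hy.1)
    (fun s hs => by simp [hw])
    (fun s hs => hwA s (hI s hs) R ⟨hR.le, le_refl _⟩)
    (ρ / 2) ⟨by positivity, by rw [hRd]; nlinarith⟩
  -- approximation
  have hap : ∀ x, |SD ε (u t0) x - ε ^ 2 * uxx t0 x| ≤ ε ^ 2 * (U * ε ^ α) := by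
    intro x
    refine SD_approx (u t0) (ux t0) (uxx t0) (hm.hasUx t0 ht0) (hm.hasUxx t0 ht0) x ε _ hε.le ?_
    intro z hz
    refine (hU t0 ht0 z x).trans ?_
    have : |z - x| ≤ ε := by rw [abs_le]; constructor <;> linarith [hz.1, hz.2]
    gcongr
  have hap2 : ε ^ 2 * (σ * (uxx t0 (x0 + ρ / 2) - uxx t0 (x0 - ρ / 2))) ≤
      w t0 (ρ / 2) + ε ^ 2 * (2 * U * ε ^ α) := by
    have e : |(ε ^ 2 * uxx t0 (x0 + ρ / 2) - SD ε (u t0) (x0 + ρ / 2))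
        - (ε ^ 2 * uxx t0 (x0 - ρ / 2) - SD ε (u t0) (x0 - ρ / 2))| ≤ ε ^ 2 * (2 * U * ε ^ α) := by
      have e1 := hap (x0 + ρ / 2)
      have e2 := hap (x0 - ρ / 2)
      rw [abs_le] at *
      constructor <;> linarith [e1.1, e1.2, e2.1, e2.2]
    have := hsig _ _ e
    simp only [hw]
    linarith
  have hfin : ε ^ 2 * (σ * (uxx t0 (x0 + ρ / 2) - uxx t0 (x0 - ρ / 2))) ≤ ε ^ 2 *
      ((2 * κ ^ α * U + 2 * (2 * N) ^ α / N * U + 2 * N * κ ^ α / κ ^ 2 * F + 3 * G) * ρ ^ α) := by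
    refine hap2.trans ((add_le_add_left key _).trans ?_)
    have r1 : ε ^ α = κ ^ α * ρ ^ α := Real.mul_rpow hκ.le hρ.le
    have r2 : (2 * R) ^ α = (2 * N) ^ α * ρ ^ α := by
      rw [hRd, ← mul_assoc, Real.mul_rpow (by positivity) hρ.le]
    rw [r1, r2]
    have i1 : ρ / 2 / R = 1 / (2 * N) := by rw [hRd]; field_simp
    have i2 : ρ / 2 * R = N * ρ ^ 2 / 2 := by rw [hRd]; ring
    rw [i1, i2]
    have j1 : (2 * (ε ^ 2 * (U * ((2 * N) ^ α * ρ ^ α))) / R ^ 2 + 4 * F * (κ ^ α * ρ ^ α)) * (N * ρ ^ 2 / 2)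
       = ε ^ 2 * ((2 * N) ^ α / N * U * ρ ^ α) + ε ^ 2 * (2 * N * κ ^ α / κ ^ 2 * F * ρ ^ α) := by
      rw [hRd, hεd]; field_simp; ring
    have j2 : ε ^ 2 * (2 * G * ρ ^ α / ρ) * (ρ / 2) = ε ^ 2 * (G * ρ ^ α) := by field_simp
    rw [j1, j2]
    have j3 : (1 / (2 * N)) ^ 2 ≤ 1 / N := by
      rw [div_pow, div_le_div_iff₀ (by positivity) hNp]; nlinarith
    have j4 : ε ^ 2 * (U * ((2 * N) ^ α * ρ ^ α)) * (1 / (2 * N)) ^ 2 ≤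
      ε ^ 2 * (U * ((2 * N) ^ α * ρ ^ α)) * (1 / N) := by gcongr
    have j5 : ε ^ 2 * (U * ((2 * N) ^ α * ρ ^ α)) * (1 / N) = ε ^ 2 * ((2 * N) ^ α / N * U * ρ ^ α) := by ring
    rw [j5] at j4
    have j6 : ε ^ 2 * ((2 * κ ^ α * U + 2 * (2 * N) ^ α / N * U + 2 * N * κ ^ α / κ ^ 2 * F + 3 * G) * ρ ^ α)
      = ε ^ 2 * (2 * U * (κ ^ α * ρ ^ α)) + 2 * (ε ^ 2 * ((2 * N) ^ α / N * U * ρ ^ α))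
        + ε ^ 2 * (2 * N * κ ^ α / κ ^ 2 * F * ρ ^ α) + 3 * (ε ^ 2 * (G * ρ ^ α)) := by ring
    have j7 : ε ^ 2 * (2 * G * ρ ^ α) = 2 * (ε ^ 2 * (G * ρ ^ α)) := by ring
    rw [j6, j7]
    linarith only [j4]
  exact le_of_mul_le_mul_left hfin (by positivity)

lemma core (α : ℝ) (hα0 : 0 < α) (hα1 : α < 1) : ∃ C, 1 ≤ C ∧ ∀ (T U F G : ℝ), 0 < T →
    0 ≤ U → 0 ≤ F → 0 ≤ G → 
    ∀ (u ut ux uxx : ℝ → ℝ → ℝ), MemC12a T α u ut ux uxx →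
    (∀ t ∈ Ioo 0 T, ∀ x y, |uxx t x - uxx t y| ≤ U * |x - y| ^ α) →
    (∀ t ∈ Ioo 0 T, ∀ x y, |(ut t x + 1/2 * uxx t x) - (ut t y + 1/2 * uxx t y)|
      ≤ F * |x - y| ^ α) →
    (∀ x y, |uxx T x - uxx T y| ≤ G * |x - y| ^ α) →
    (∀ t ∈ Ioo 0 T, ∀ x y, |uxx t x - uxx t y| ≤ (U / 2 + C * (F + G)) * |x - y| ^ α) := by
  set κ : ℝ := (1/8) ^ (1/α) with hκd
  set N : ℝ := 16 ^ (1/(1-α)) with hNd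
  have hκ : 0 < κ := by positivity
  have hκα : κ ^ α = 1/8 := by
    rw [hκd, ← Real.rpow_mul (by norm_num)]; simp [hα0.ne']
  have hN : 1 ≤ N := Real.one_le_rpow (by norm_num) (by apply div_nonneg <;> linarith)
  have hNp : 0 < N := by linarith
  have hNα : N ^ α / N = 1/16 := by
    have h1 : N ^ (α - 1) = 1/16 := by
      rw [hNd, ← Real.rpow_mul (by norm_num), show 1 / (1 - α) * (α - 1) = -1 by
        have : 1 - α ≠ 0 := by linarith
        field_simp; ring]
      rw [Real.rpow_neg_one]; norm_num
    rw [← h1, Real.rpow_sub_one hNp.ne']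
  have h2α : (2:ℝ) ^ α ≤ 2 := by
    calc (2:ℝ) ^ α ≤ 2 ^ (1:ℝ) := Real.rpow_le_rpow_of_exponent_le (by norm_num) hα1.le
      _ = 2 := by norm_num
  have h2N : 2 * (2 * N) ^ α / N ≤ 1/4 := by
    rw [Real.mul_rpow (by norm_num) hNp.le]
    have : 2 * (2 ^ α * N ^ α) / N = 2 * 2 ^ α * (N ^ α / N) := by ring
    rw [this, hNα]; linarith
  have hpos : 0 ≤ 2 * N * κ ^ α / κ ^ 2 := by positivity
  refine ⟨2 * N * κ ^ α / κ ^ 2 + 3, by linarith, ?_⟩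
  intro T U F G hT hU0 hF0 hG0 u ut ux uxx hm hU hF hG
  have main : ∀ t ∈ Ioo 0 T, ∀ x y, x < y → |uxx t y - uxx t x| ≤
      (U / 2 + (2 * N * κ ^ α / κ ^ 2 + 3) * (F + G)) * |y - x| ^ α := by
    intro t ht x y hxy
    have hc := fun σ hσ => core_step T α U F G κ N hT hα0 hα1 hU0 hF0 hG0 hκ hN u ut ux uxx hm hU hF hG σ hσ
      t ht ((x + y) / 2) (y - x) (by linarith)
    have e1 := hc 1 (by simp)
    have e2 := hc (-1) (by simp)
    rw [show (x + y) / 2 + (y - x) / 2 = y by ring, show (x + y) / 2 - (y - x) / 2 = x by ring] at e1 e2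
    have hρ : 0 ≤ (y - x) ^ α := Real.rpow_nonneg (by linarith) _
    rw [abs_of_pos (show 0 < y - x by linarith)]
    have hb : (2 * κ ^ α * U + 2 * (2 * N) ^ α / N * U + 2 * N * κ ^ α / κ ^ 2 * F + 3 * G) * (y - x) ^ α
      ≤ (U / 2 + (2 * N * κ ^ α / κ ^ 2 + 3) * (F + G)) * (y - x) ^ α := by
      apply mul_le_mul_of_nonneg_right _ hρ
      have a1 : 2 * (2 * N) ^ α / N * U ≤ 1/4 * U := by gcongr
      have a2 : 2 * κ ^ α * U = 1/4 * U := by rw [hκα]; ring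
      have a3 : 0 ≤ 2 * N * κ ^ α / κ ^ 2 * G := by positivity
      linarith
    rw [abs_le]
    constructor <;> linarith
  intro t ht x y
  rcases lt_trichotomy x y with h | h | h
  · rw [abs_sub_comm, abs_sub_comm x y]; exact main t ht x y h
  · subst h; simp [Real.zero_rpow hα0.ne']
  · exact main t ht y x h

lemma fd_bound (g g' g'' : ℝ → ℝ) (hg : ∀ x, HasDerivAt g (g' x) x)
    (hg' : ∀ x, HasDerivAt g' (g'' x) x) (x δ S : ℝ) (hδ : 0 ≤ δ) (hS : ∀ z, |g'' z| ≤ S) :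
    |g (x + δ) - g x - δ * g' x| ≤ δ ^ 2 * S := by
  have hS0 : 0 ≤ S := (abs_nonneg _).trans (hS 0)
  have h1 : ∀ z ∈ Icc x (x + δ), |g' z - g' x| ≤ S * δ := by
    intro z hz
    have := Convex.norm_image_sub_le_of_norm_hasDerivWithin_le (f := g') (f' := g'')
      (s := univ) (C := S) (x := x) (y := z)
      (fun y _ => (hg' y).hasDerivWithinAt) (fun y _ => hS y) convex_univ trivial trivial
    refine this.trans ?_
    rw [Real.norm_eq_abs, abs_of_nonneg (by linarith [hz.1])]
    exact mul_le_mul_of_nonneg_left (by linarith [hz.2]) hS0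
  have := Convex.norm_image_sub_le_of_norm_hasDerivWithin_le (f := fun z => g z - z * g' x)
      (f' := fun z => g' z - g' x)
      (s := Icc x (x + δ)) (C := S * δ) (x := x) (y := x + δ)
      (fun y _ => by
        have := (hg y).sub ((hasDerivAt_id' y).mul_const (g' x))
        rw [one_mul] at this
        exact this.hasDerivWithinAt) h1 (convex_Icc _ _)
      ⟨by linarith, by linarith⟩ ⟨by linarith, by linarith⟩
  simp only [Real.norm_eq_abs, add_sub_cancel_left, abs_of_nonneg hδ] at this
  calc _ = |g (x + δ) - (x + δ) * g' x - (g x - x * g' x)| := by congr 1; ring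
    _ ≤ _ := this
    _ = _ := by ring

lemma interp (g g' g'' : ℝ → ℝ) (hg : ∀ x, HasDerivAt g (g' x) x)
    (hg' : ∀ x, HasDerivAt g' (g'' x) x) (α U m δ : ℝ) (hα0 : 0 < α) (hα1 : α < 1)
    (hδ : 0 < δ) (hδ1 : δ ≤ 1)
    (hU0 : 0 ≤ U) (hU : ∀ x y, |g'' x - g'' y| ≤ U * |x - y| ^ α) (hm : ∀ x, |g x| ≤ m) :
    (∀ x, |g' x| ≤ U * δ ^ α * δ + 6 * m / δ) ∧
    (∀ x y, |g' x - g' y| ≤ (3 * U * δ + 16 * m / (δ * δ ^ α)) * |x - y| ^ α) := by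
  have hm0 : 0 ≤ m := (abs_nonneg _).trans (hm 0)
  set q := δ ^ α with hq
  have hq0 : 0 < q := by positivity
  have h2 : ∀ x, |g'' x| ≤ U * q + 4 * m / δ ^ 2 := by
    intro x
    have h := SD_approx g g' g'' hg hg' x δ (U * q) hδ.le (fun z hz => by
      refine (hU z x).trans ?_
      have : |z - x| ≤ δ := by rw [abs_le]; constructor <;> linarith [hz.1, hz.2]
      rw [hq]
      gcongr)
    have e1 := hm (x + δ)
    have e2 := hm x
    have e3 := hm (x - δ)
    unfold SD at h
    have : |δ ^ 2 * g'' x| ≤ δ ^ 2 * (U * q) + 4 * m := by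
      rw [abs_le] at *
      constructor <;> linarith [h.1, h.2, e1.1, e1.2, e2.1, e2.2, e3.1, e3.2]
    rw [abs_mul, abs_of_pos (show 0 < δ ^ 2 by positivity)] at this
    have e : δ ^ 2 * (U * q) + 4 * m = δ ^ 2 * (U * q + 4 * m / δ ^ 2) := by field_simp
    rw [e] at this
    exact le_of_mul_le_mul_left this (by positivity)
  have h1 : ∀ x, |g' x| ≤ U * q * δ + 6 * m / δ := by
    intro x
    have h := fd_bound g g' g'' hg hg' x δ _ hδ.le h2
    have e1 := hm (x + δ)
    have e2 := hm x
    have : |δ * g' x| ≤ δ ^ 2 * (U * q + 4 * m / δ ^ 2) + 2 * m := by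
      rw [abs_le] at *
      constructor <;> linarith [h.1, h.2, e1.1, e1.2, e2.1, e2.2]
    rw [abs_mul, abs_of_pos hδ] at this
    have e : δ ^ 2 * (U * q + 4 * m / δ ^ 2) + 2 * m = δ * (U * q * δ + 6 * m / δ) := by
      field_simp; ring
    rw [e] at this
    exact le_of_mul_le_mul_left this hδ
  refine ⟨h1, ?_⟩
  intro x y
  set τ := |x - y| with hτ
  have hτ0 : 0 ≤ τ := abs_nonneg _
  rcases le_or_gt τ δ with h | h
  · rcases eq_or_lt_of_le hτ0 with h0 | h0
    · have : x = y := by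
        have : x - y = 0 := abs_eq_zero.mp h0.symm
        linarith
      rw [this, sub_self, abs_zero]; positivity
    have a1 := Convex.norm_image_sub_le_of_norm_hasDerivWithin_le (f := g') (f' := g'')
      (s := univ) (x := y) (y := x)
      (fun y _ => (hg' y).hasDerivWithinAt) (fun y _ => h2 y) convex_univ trivial trivial
    rw [Real.norm_eq_abs, Real.norm_eq_abs, ← hτ] at a1
    have a2 : τ ≤ δ / q * τ ^ α := by
      have b1 : τ = τ ^ (1 - α) * τ ^ α := by rw [← Real.rpow_add h0]; simp
      have b2 : δ / q = δ ^ (1 - α) := by rw [hq, Real.rpow_sub hδ, Real.rpow_one]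
      have b3 : τ ^ (1 - α) ≤ δ ^ (1 - α) := Real.rpow_le_rpow hτ0 h (by linarith)
      rw [b2]
      calc τ = τ ^ (1 - α) * τ ^ α := b1
        _ ≤ _ := by gcongr
    calc |g' x - g' y| ≤ (U * q + 4 * m / δ ^ 2) * τ := a1
      _ ≤ (U * q + 4 * m / δ ^ 2) * (δ / q * τ ^ α) := by gcongr
      _ = (U * δ + 4 * m / (δ * q)) * τ ^ α := by field_simp
      _ ≤ _ := by
        apply mul_le_mul_of_nonneg_right _ (by positivity)
        have : 0 ≤ U * δ := by positivity
        have : 4 * m / (δ * q) ≤ 16 * m / (δ * q) := by gcongr; norm_num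
        linarith
  · have a2 : q ≤ τ ^ α := Real.rpow_le_rpow hδ.le h.le hα0.le
    have a3 : 1 ≤ τ ^ α / q := by rwa [le_div_iff₀ hq0, one_mul]
    have a4 : |g' x - g' y| ≤ 2 * (U * q * δ + 6 * m / δ) := by
      have e1 := h1 x
      have e2 := h1 y
      rw [abs_le] at *
      constructor <;> linarith [e1.1, e1.2, e2.1, e2.2]
    calc |g' x - g' y| ≤ 2 * (U * q * δ + 6 * m / δ) * 1 := by rw [mul_one]; exact a4
      _ ≤ 2 * (U * q * δ + 6 * m / δ) * (τ ^ α / q) := by gcongr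
      _ = (2 * U * δ + 12 * m / (δ * q)) * τ ^ α := by field_simp; ring
      _ ≤ _ := by
        apply mul_le_mul_of_nonneg_right _ (by positivity)
        have : 0 ≤ U * δ := by positivity
        have : 12 * m / (δ * q) ≤ 16 * m / (δ * q) := by gcongr; norm_num
        linarith

lemma time_reg (T α U B : ℝ) (hα0 : 0 < α) (hU0 : 0 ≤ U) (hB0 : 0 ≤ B)
    (u ut ux uxx : ℝ → ℝ → ℝ) (hm : MemC12a T α u ut ux uxx)
    (hU : ∀ t ∈ Ioo 0 T, ∀ x y, |uxx t x - uxx t y| ≤ U * |x - y| ^ α)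
    (hB : ∀ t ∈ Ioo 0 T, ∀ x y, |ut t x - ut t y| ≤ B * |x - y| ^ α)
    (t s : ℝ) (ht : t ∈ Ioo 0 T) (hs : s ∈ Ioo 0 T) :
    (∀ x, |uxx t x - uxx s x| ≤ (2 * U + 2 * B) * Real.sqrt |t - s| ^ α) ∧
    (∀ x, |ux t x - ux s x| ≤ (2 * U + 3 * B) * (Real.sqrt |t - s| * Real.sqrt |t - s| ^ α)) := by
  set τ := Real.sqrt |t - s| with hτ
  have hτ0 : 0 ≤ τ := Real.sqrt_nonneg _
  have hτ2 : |t - s| = τ ^ 2 := (Real.sq_sqrt (abs_nonneg _)).symm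
  rcases eq_or_lt_of_le hτ0 with h0 | h0
  · have : t = s := by
      rw [← h0] at hτ2
      have : t - s = 0 := by simpa using hτ2
      linarith
    subst this
    constructor
    · intro x; rw [sub_self, abs_zero]; positivity
    · intro x; rw [sub_self, abs_zero]; positivity
  have hBe : ∀ r ∈ Ioo 0 T, ∀ x y, |x - y| = τ → |ut r x - ut r y| ≤ B * τ ^ α := by
    intro r hr x y hxy
    have := hB r hr x y
    rwa [hxy] at this
  have hp : ∀ x : ℝ, |x + τ - x| = τ := fun x => by rw [add_sub_cancel_left, abs_of_pos h0]
  have hn : ∀ x : ℝ, |x - τ - x| = τ := fun x => by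
    rw [show x - τ - x = -τ by ring, abs_neg, abs_of_pos h0]
  have c1 : ∀ x, |uxx t x - uxx s x| ≤ (2 * U + 2 * B) * τ ^ α := by
    intro x
    have a1 := Convex.norm_image_sub_le_of_norm_hasDerivWithin_le (f := fun r => SD τ (u r) x)
      (f' := fun r => SD τ (ut r) x) (s := Ioo 0 T) (C := 2 * B * τ ^ α) (x := s) (y := t)
      (fun r hr => by
        have hd := hm.hasUt r hr
        exact (((hd (x + τ)).sub ((hd x).const_mul 2)).add (hd (x - τ))).hasDerivWithinAt)
      (fun r hr => by
        have e1 := hBe r hr _ _ (hp x)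
        have e2 := hBe r hr _ _ (hn x)
        rw [Real.norm_eq_abs]
        unfold SD
        rw [abs_le] at *
        constructor <;> linarith [e1.1, e1.2, e2.1, e2.2]) (convex_Ioo _ _) hs ht
    rw [Real.norm_eq_abs, Real.norm_eq_abs, hτ2] at a1
    have hap : ∀ r ∈ Ioo 0 T, |SD τ (u r) x - τ ^ 2 * uxx r x| ≤ τ ^ 2 * (U * τ ^ α) := by
      intro r hr
      refine SD_approx (u r) (ux r) (uxx r) (hm.hasUx r hr) (hm.hasUxx r hr) x τ _ h0.le ?_
      intro z hz
      refine (hU r hr z x).trans ?_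
      have : |z - x| ≤ τ := by rw [abs_le]; constructor <;> linarith [hz.1, hz.2]
      gcongr
    have a2 := hap t ht
    have a3 := hap s hs
    have : |τ ^ 2 * (uxx t x - uxx s x)| ≤ τ ^ 2 * ((2 * U + 2 * B) * τ ^ α) := by
      rw [abs_le] at *
      constructor <;> linarith [a1.1, a1.2, a2.1, a2.2, a3.1, a3.2]
    rw [abs_mul, abs_of_pos (show 0 < τ ^ 2 by positivity)] at this
    exact le_of_mul_le_mul_left this (by positivity)
  refine ⟨c1, ?_⟩
  intro x
  have a1 := Convex.norm_image_sub_le_of_norm_hasDerivWithin_le (f := fun r => u r (x + τ) - u r x)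
      (f' := fun r => ut r (x + τ) - ut r x) (s := Ioo 0 T) (C := B * τ ^ α) (x := s) (y := t)
      (fun r hr => by
        have hd := hm.hasUt r hr
        exact ((hd (x + τ)).sub (hd x)).hasDerivWithinAt)
      (fun r hr => hBe r hr _ _ (hp x)) (convex_Ioo _ _) hs ht
  rw [Real.norm_eq_abs, Real.norm_eq_abs, hτ2] at a1
  have a2 := fd_bound (fun z => u t z - u s z) (fun z => ux t z - ux s z) (fun z => uxx t z - uxx s z)
    (fun z => (hm.hasUx t ht z).sub (hm.hasUx s hs z))
    (fun z => (hm.hasUxx t ht z).sub (hm.hasUxx s hs z)) x τ _ h0.le c1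
  have : |τ * (ux t x - ux s x)| ≤ τ * ((2 * U + 3 * B) * (τ * τ ^ α)) := by
    rw [abs_le] at *
    constructor <;> nlinarith [a1.1, a1.2, a2.1, a2.2]
  rw [abs_mul, abs_of_pos h0] at this
  exact le_of_mul_le_mul_left this h0

lemma sInf_spec (S : Set ℝ) (hne : ∃ K, K ∈ S) (h0 : ∀ K ∈ S, 0 ≤ K) (hcl : IsClosed S) :
    sInf S ∈ S := hcl.csInf_mem hne ⟨0, fun K hK => h0 K hK⟩

lemma hSemi_spec (T α : ℝ) (v : ℝ → ℝ → ℝ) (h : ∃ K : ℝ, ∀ t₁ ∈ Icc (0:ℝ) T, ∀ t₂ ∈ Icc (0:ℝ) T,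
    ∀ x₁ x₂ : ℝ, |v t₁ x₁ - v t₂ x₂| ≤ K * pd t₁ x₁ t₂ x₂ ^ α) :
    0 ≤ hSemi T α v ∧ ∀ t₁ ∈ Icc (0:ℝ) T, ∀ t₂ ∈ Icc (0:ℝ) T,
    ∀ x₁ x₂ : ℝ, |v t₁ x₁ - v t₂ x₂| ≤ hSemi T α v * pd t₁ x₁ t₂ x₂ ^ α := by
  obtain ⟨K, hK⟩ := h
  refine sInf_spec {K : ℝ | 0 ≤ K ∧ ∀ t₁ ∈ Icc (0:ℝ) T, ∀ t₂ ∈ Icc (0:ℝ) T, ∀ x₁ x₂ : ℝ,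
    |v t₁ x₁ - v t₂ x₂| ≤ K * pd t₁ x₁ t₂ x₂ ^ α} ⟨max K 0, le_max_right _ _, ?_⟩ (fun K h => h.1) ?_
  · intro t₁ h₁ t₂ h₂ x₁ x₂
    refine (hK t₁ h₁ t₂ h₂ x₁ x₂).trans (mul_le_mul_of_nonneg_right (le_max_left _ _) ?_)
    apply Real.rpow_nonneg
    unfold pd; positivity
  · simp only [Set.ofPred_and, Set.ofPred_forall]
    refine isClosed_Ici.inter ?_
    refine isClosed_iInter fun t₁ => isClosed_iInter fun _ => isClosed_iInter fun t₂ =>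
      isClosed_iInter fun _ => isClosed_iInter fun x₁ => isClosed_iInter fun x₂ => ?_
    exact isClosed_le continuous_const (by fun_prop)

lemma gHSemi_spec (α : ℝ) (v : ℝ → ℝ) (h : ∃ K : ℝ, ∀ x y : ℝ, |v x - v y| ≤ K * |x - y| ^ α) :
    0 ≤ gHSemi α v ∧ ∀ x y : ℝ, |v x - v y| ≤ gHSemi α v * |x - y| ^ α := by
  obtain ⟨K, hK⟩ := h
  refine sInf_spec {K : ℝ | 0 ≤ K ∧ ∀ x y : ℝ, |v x - v y| ≤ K * |x - y| ^ α}
    ⟨max K 0, le_max_right _ _, ?_⟩ (fun K h => h.1) ?_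
  · intro x y
    refine (hK x y).trans (mul_le_mul_of_nonneg_right (le_max_left _ _) (by positivity))
  · simp only [Set.ofPred_and, Set.ofPred_forall]
    refine isClosed_Ici.inter ?_
    refine isClosed_iInter fun x₁ => isClosed_iInter fun x₂ => ?_
    exact isClosed_le continuous_const (by fun_prop)

lemma sp_spec (T α : ℝ) (v : ℝ → ℝ → ℝ) (h : ∃ K : ℝ, ∀ t ∈ Ioo (0:ℝ) T, ∀ x y : ℝ,
    |v t x - v t y| ≤ K * |x - y| ^ α) :
    ∃ U : ℝ, 0 ≤ U ∧ (∀ t ∈ Ioo (0:ℝ) T, ∀ x y : ℝ, |v t x - v t y| ≤ U * |x - y| ^ α) ∧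
    ∀ K, 0 ≤ K → (∀ t ∈ Ioo (0:ℝ) T, ∀ x y : ℝ, |v t x - v t y| ≤ K * |x - y| ^ α) → U ≤ K := by
  obtain ⟨K, hK⟩ := h
  have := sInf_spec {K : ℝ | 0 ≤ K ∧ ∀ t ∈ Ioo (0:ℝ) T, ∀ x y : ℝ, |v t x - v t y| ≤ K * |x - y| ^ α}
    ⟨max K 0, le_max_right _ _, ?_⟩ (fun K h => h.1) ?_
  · exact ⟨_, this.1, this.2, fun K h1 h2 => csInf_le ⟨0, fun K hK => hK.1⟩ ⟨h1, h2⟩⟩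
  · intro t ht x y
    refine (hK t ht x y).trans (mul_le_mul_of_nonneg_right (le_max_left _ _) (by positivity))
  · simp only [Set.ofPred_and, Set.ofPred_forall]
    refine isClosed_Ici.inter ?_
    refine isClosed_iInter fun t => isClosed_iInter fun _ => isClosed_iInter fun x₁ =>
      isClosed_iInter fun x₂ => ?_
    exact isClosed_le continuous_const (by fun_prop)

lemma supN_spec (T : ℝ) (v : ℝ → ℝ → ℝ) (h : ∃ M : ℝ, ∀ t ∈ Icc (0:ℝ) T, ∀ x : ℝ, |v t x| ≤ M) :
    0 ≤ supN T v ∧ ∀ t ∈ Icc (0:ℝ) T, ∀ x : ℝ, |v t x| ≤ supN T v := by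
  obtain ⟨K, hK⟩ := h
  refine sInf_spec {M : ℝ | 0 ≤ M ∧ ∀ t ∈ Icc (0:ℝ) T, ∀ x : ℝ, |v t x| ≤ M}
    ⟨max K 0, le_max_right _ _, ?_⟩ (fun K h => h.1) ?_
  · intro t ht x
    exact (hK t ht x).trans (le_max_left _ _)
  · simp only [Set.ofPred_and, Set.ofPred_forall]
    refine isClosed_Ici.inter ?_
    refine isClosed_iInter fun x₁ => isClosed_iInter fun _ => isClosed_iInter fun x₂ => ?_
    exact isClosed_le continuous_const (by fun_prop)

lemma hSemi_le (T α K : ℝ) (hT : 0 < T) (hα0 : 0 < α) (hK : 0 ≤ K) (v : ℝ → ℝ → ℝ)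
    (hv : MemCa T α v)
    (h : ∀ t₁ ∈ Ioo (0:ℝ) T, ∀ t₂ ∈ Ioo (0:ℝ) T,
    ∀ x₁ x₂ : ℝ, |v t₁ x₁ - v t₂ x₂| ≤ K * pd t₁ x₁ t₂ x₂ ^ α) : hSemi T α v ≤ K := by
  refine csInf_le ⟨0, fun K hK => hK.1⟩ ⟨hK, ?_⟩
  have hc : ∀ x, ContinuousOn (fun t => v t x) (Icc 0 T) := by
    intro x
    refine hv.1.comp (f := fun t : ℝ => (t, x)) (by fun_prop) ?_
    intro t ht
    exact ⟨ht, trivial⟩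
  have hcl : closure (Ioo 0 T) = Icc 0 T := closure_Ioo hT.ne
  have hpow : ∀ c : ℝ → ℝ, Continuous c → Continuous (fun t => c t ^ α) :=
    fun c hc => hc.rpow_const (fun _ => Or.inr hα0.le)
  have step : ∀ t₁ ∈ Icc (0:ℝ) T, ∀ t₂ ∈ Ioo (0:ℝ) T,
    ∀ x₁ x₂ : ℝ, |v t₁ x₁ - v t₂ x₂| ≤ K * pd t₁ x₁ t₂ x₂ ^ α := by
    intro t₁ h₁ t₂ h₂ x₁ x₂
    refine le_on_closure (s := Ioo 0 T) (f := fun t => |v t x₁ - v t₂ x₂|)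
      (g := fun t => K * pd t x₁ t₂ x₂ ^ α)
      (fun t ht => h t ht t₂ h₂ x₁ x₂) ?_ ?_ (by rw [hcl]; exact h₁)
    · rw [hcl]; exact ((hc x₁).sub continuousOn_const).abs
    · exact (continuous_const.mul (hpow _ (by unfold pd; fun_prop))).continuousOn
  intro t₁ h₁ t₂ h₂ x₁ x₂
  refine le_on_closure (s := Ioo 0 T) (f := fun t => |v t₁ x₁ - v t x₂|)
      (g := fun t => K * pd t₁ x₁ t x₂ ^ α)
      (fun t ht => step t₁ h₁ t ht x₁ x₂) ?_ ?_ (by rw [hcl]; exact h₂)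
  · rw [hcl]; exact (continuousOn_const.sub (hc x₂)).abs
  · exact (continuous_const.mul (hpow _ (by unfold pd; fun_prop))).continuousOn

lemma prod_diff (a b c d Ma Mb Ka Kb : ℝ) (ha : |a| ≤ Ma) (hd : |d| ≤ Mb)
    (hac : |a - c| ≤ Ka) (hbd : |b - d| ≤ Kb) : |a * b - c * d| ≤ Ma * Kb + Mb * Ka := by
  have h0 : 0 ≤ Ma := (abs_nonneg _).trans ha
  have h1 : 0 ≤ Mb := (abs_nonneg _).trans hd
  calc |a * b - c * d| = |a * (b - d) + d * (a - c)| := by congr 1; ring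
    _ ≤ |a| * |b - d| + |d| * |a - c| := by
      rw [← abs_mul, ← abs_mul]; exact abs_add_le _ _
    _ ≤ _ := by gcongr

set_option maxHeartbeats 2000000 in
/-- the Hölder estimate with a transport term. -/
theorem stmt_16 (α : ℝ) (hα0 : 0 < α) (hα1 : α < 1) :
    ∃ C : ℝ, 0 < C ∧
      ∀ T : ℝ, 0 < T →
      ∀ u ut ux uxx h : ℝ → ℝ → ℝ, MemC12a T α u ut ux uxx → MemCa T α h →
        hSemi T α ut + hSemi T α uxx ≤
          C * (hSemi T α (fun t x => ut t x + (1/2) * uxx t x + h t x * ux t x) +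
            gHSemi α (fun x => uxx T x) +
            (1 + hNorm T α h ^ (2 + α)) * supN T u) := by
  obtain ⟨C0, hC0, hcore⟩ := core α hα0 hα1
  set c : ℝ := 1 / (16 * C0) with hc
  have hC0p : 0 < C0 := by linarith
  have hcp : 0 < c := by positivity
  have hc16 : c ≤ 1 / 16 := by
    rw [hc]
    apply one_div_le_one_div_of_le (by norm_num); linarith
  have hcC : C0 * c = 1 / 16 := by rw [hc]; field_simp
  set E0 : ℝ := 8 / c ^ (1 + α) with hE0
  have hE0p : 0 < E0 := by positivity
  refine ⟨(98 * C0 + 8) * (1 + 22 * E0), by positivity, ?_⟩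
  intro T hT u ut ux uxx h hm hh
  have hsub : ∀ t, t ∈ Ioo 0 T → t ∈ Icc 0 T := fun t ht => ⟨ht.1.le, ht.2.le⟩
  have hTT : T ∈ Icc 0 T := ⟨hT.le, le_refl _⟩
  have hpds : ∀ t x y, pd t x t y = |x - y| := by intro t x y; simp [pd]
  have hpd0 : ∀ t x s y, 0 ≤ pd t x s y := by intro t x s y; unfold pd; positivity
  -- specifications
  obtain ⟨hm0, hmu⟩ := supN_spec T u hm.memU.2.1
  obtain ⟨hHs0, hHs⟩ := supN_spec T h hh.2.1
  obtain ⟨hHh0, hHh⟩ := hSemi_spec T α h hh.2.2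
  have hLex : ∃ K : ℝ, ∀ t₁ ∈ Icc (0:ℝ) T, ∀ t₂ ∈ Icc (0:ℝ) T, ∀ x₁ x₂ : ℝ,
      |(ut t₁ x₁ + (1/2) * uxx t₁ x₁ + h t₁ x₁ * ux t₁ x₁) -
        (ut t₂ x₂ + (1/2) * uxx t₂ x₂ + h t₂ x₂ * ux t₂ x₂)| ≤ K * pd t₁ x₁ t₂ x₂ ^ α := by
    obtain ⟨K1, hK1⟩ := hm.memUt.2.2
    obtain ⟨K2, hK2⟩ := hm.memUxx.2.2
    obtain ⟨K3, hK3⟩ := hm.memUx.2.2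
    obtain ⟨M, hM⟩ := hm.memUx.2.1
    refine ⟨K1 + 1/2 * K2 + (supN T h * K3 + M * hSemi T α h), ?_⟩
    intro t₁ h₁ t₂ h₂ x₁ x₂
    have e1 := hK1 t₁ h₁ t₂ h₂ x₁ x₂
    have e2 := hK2 t₁ h₁ t₂ h₂ x₁ x₂
    have e3 := prod_diff _ _ _ _ _ _ _ _ (hHs t₁ h₁ x₁) (hM t₂ h₂ x₂)
      (hHh t₁ h₁ t₂ h₂ x₁ x₂) (hK3 t₁ h₁ t₂ h₂ x₁ x₂)
    rw [abs_le] at *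
    constructor <;> linarith [e1.1, e1.2, e2.1, e2.2, e3.1, e3.2]
  obtain ⟨hP0, hP⟩ := hSemi_spec T α
    (fun t x => ut t x + (1/2) * uxx t x + h t x * ux t x) hLex
  have hGex : ∃ K : ℝ, ∀ x y : ℝ, |uxx T x - uxx T y| ≤ K * |x - y| ^ α := by
    obtain ⟨K2, hK2⟩ := hm.memUxx.2.2
    refine ⟨K2, fun x y => ?_⟩
    have := hK2 T hTT T hTT x y
    rwa [hpds] at this
  obtain ⟨hG0, hG⟩ := gHSemi_spec α (fun x => uxx T x) hGex
  have hUex : ∃ K : ℝ, ∀ t ∈ Ioo (0:ℝ) T, ∀ x y : ℝ, |uxx t x - uxx t y| ≤ K * |x - y| ^ α := by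
    obtain ⟨K2, hK2⟩ := hm.memUxx.2.2
    refine ⟨K2, fun t ht x y => ?_⟩
    have := hK2 t (hsub t ht) t (hsub t ht) x y
    rwa [hpds] at this
  obtain ⟨U, hU0, hU, hUmin⟩ := sp_spec T α uxx hUex
  set P := hSemi T α (fun t x => ut t x + (1/2) * uxx t x + h t x * ux t x) with hPd
  set G := gHSemi α (fun x => uxx T x) with hGd
  set m := supN T u with hmd
  set H := hNorm T α h with hHd
  have hHsum : H = supN T h + hSemi T α h := rfl
  have hH0 : 0 ≤ H := by rw [hHsum]; linarith
  have hHs' : ∀ t ∈ Icc (0:ℝ) T, ∀ x : ℝ, |h t x| ≤ H := fun t ht x =>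
    (hHs t ht x).trans (by rw [hHsum]; linarith)
  have hHh' : ∀ t₁ ∈ Icc (0:ℝ) T, ∀ t₂ ∈ Icc (0:ℝ) T, ∀ x₁ x₂ : ℝ,
      |h t₁ x₁ - h t₂ x₂| ≤ H * pd t₁ x₁ t₂ x₂ ^ α := fun t₁ h₁ t₂ h₂ x₁ x₂ =>
    (hHh t₁ h₁ t₂ h₂ x₁ x₂).trans (mul_le_mul_of_nonneg_right (by rw [hHsum]; linarith)
      (Real.rpow_nonneg (hpd0 _ _ _ _) _))
  set W := (1 + H ^ (2 + α)) * m with hW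
  have hW0 : 0 ≤ W := by positivity
  -- choice of scale
  set δ := c / (1 + H) with hδd
  have hδ : 0 < δ := by positivity
  have hHδ : H * δ ≤ c := by
    rw [hδd, ← mul_div_assoc, div_le_iff₀ (by positivity)]; nlinarith
  have hδ1 : δ ≤ 1 := by
    rw [hδd, div_le_iff₀ (by positivity)]; linarith
  set q := δ ^ α with hq
  have hq0 : 0 < q := by positivity
  have hq1 : q ≤ 1 := Real.rpow_le_one hδ.le hδ1 hα0.le
  set Y := m / (δ * q) with hY
  have hY0 : 0 ≤ Y := by positivity
  have h8 : (1 + H) ^ (2 + α) ≤ 8 * (1 + H ^ (2 + α)) := by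
    have h2 : (2:ℝ) ^ (2 + α) ≤ 8 := by
      calc (2:ℝ) ^ (2 + α) ≤ 2 ^ (3:ℝ) :=
            Real.rpow_le_rpow_of_exponent_le (by norm_num) (by linarith)
        _ = 8 := by norm_num
    have hHp : 0 ≤ H ^ (2 + α) := by positivity
    rcases le_total H 1 with h1 | h1
    · have : (1 + H) ^ (2 + α) ≤ 2 ^ (2 + α) :=
        Real.rpow_le_rpow (by linarith) (by linarith) (by linarith)
      linarith
    · have : (1 + H) ^ (2 + α) ≤ (2 * H) ^ (2 + α) :=
        Real.rpow_le_rpow (by linarith) (by linarith) (by linarith)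
      rw [Real.mul_rpow (by norm_num) hH0] at this
      nlinarith
  have hHY : H * Y ≤ E0 * W := by
    have e1 : δ * q = c ^ (1 + α) / (1 + H) ^ (1 + α) := by
      rw [← Real.div_rpow hcp.le (by linarith), ← hδd, Real.rpow_add hδ, Real.rpow_one]
    have e2 : (1 + H) ^ (2 + α) = (1 + H) * (1 + H) ^ (1 + α) := by
      rw [show 2 + α = 1 + (1 + α) by ring, Real.rpow_add (by linarith), Real.rpow_one]
    have e3 : 0 < (1 + H) ^ (1 + α) := by positivity
    have e4 : 0 < c ^ (1 + α) := by positivity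
    calc H * Y = H * (1 + H) ^ (1 + α) * m / c ^ (1 + α) := by
          rw [hY, e1]; field_simp
      _ ≤ (8 * (1 + H ^ (2 + α))) * m / c ^ (1 + α) := by
          have e5 : H * (1 + H) ^ (1 + α) ≤ 8 * (1 + H ^ (2 + α)) := by
            rw [e2] at h8; linarith only [h8, e3]
          exact div_le_div_of_nonneg_right (mul_le_mul_of_nonneg_right e5 hm0) e4.le
      _ = E0 * W := by rw [hE0, hW]; ring
  -- interpolation
  have hI1 : ∀ t ∈ Ioo 0 T, ∀ x, |ux t x| ≤ U * q * δ + 6 * m / δ := fun t ht =>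
    (interp (u t) (ux t) (uxx t) (hm.hasUx t ht) (hm.hasUxx t ht) α U m δ hα0 hα1 hδ hδ1 hU0
      (hU t ht) (hmu t (hsub t ht))).1
  have hI2 : ∀ t ∈ Ioo 0 T, ∀ x y, |ux t x - ux t y| ≤ (3 * U * δ + 16 * Y) * |x - y| ^ α := by
    intro t ht x y
    have := (interp (u t) (ux t) (uxx t) (hm.hasUx t ht) (hm.hasUxx t ht) α U m δ hα0 hα1 hδ hδ1 hU0
      (hU t ht) (hmu t (hsub t ht))).2 x y
    rwa [mul_div_assoc 16 m] at this
  have hUδ : 0 ≤ U * δ := by positivity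
  have hBle : U * q * δ + 6 * m / δ ≤ U * δ + 6 * Y := by
    have e1 : U * q * δ ≤ U * 1 * δ := by gcongr
    have e2 : 6 * m / δ = 6 * Y * q := by rw [hY]; field_simp
    have e3 : 6 * Y * q ≤ 6 * Y * 1 := by gcongr
    linarith
  have hI1' : ∀ t ∈ Ioo 0 T, ∀ x, |ux t x| ≤ U * δ + 6 * Y := fun t ht x => (hI1 t ht x).trans hBle
  -- spatial Hölder of f
  set F := P + 4 * c * U + 22 * E0 * W with hFd
  have hHUδ : H * (U * δ) ≤ c * U := by
    have := mul_le_mul_of_nonneg_right hHδ hU0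
    linarith only [this]
  have hF : ∀ t ∈ Ioo 0 T, ∀ x y, |(ut t x + 1/2 * uxx t x) - (ut t y + 1/2 * uxx t y)|
      ≤ F * |x - y| ^ α := by
    intro t ht x y
    have e1 := hP t (hsub t ht) t (hsub t ht) x y
    have e0 := hHh' t (hsub t ht) t (hsub t ht) x y
    rw [hpds] at e1 e0
    have e3 := prod_diff _ _ _ _ _ _ _ _ (hHs' t (hsub t ht) x) (hI1' t ht y) e0 (hI2 t ht x y)
    have hr : 0 ≤ |x - y| ^ α := by positivity
    have e4 : (P + (H * (3 * U * δ + 16 * Y) + (U * δ + 6 * Y) * H)) * |x - y| ^ α ≤ F * |x - y| ^ α := by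
      apply mul_le_mul_of_nonneg_right _ hr
      rw [hFd]; linarith only [hHUδ, hHY]
    rw [abs_le] at *
    constructor <;> linarith [e1.1, e1.2, e3.1, e3.2]
  have hF0 : 0 ≤ F := by positivity
  have hUb := hUmin _ (by positivity) (hcore T U F G hT hU0 hF0 hG0 u ut ux uxx hm hU hF hG)
  set Z := P + G + 22 * E0 * W with hZ
  have hZ0 : 0 ≤ Z := by positivity
  have hUZ : U ≤ 4 * C0 * Z := by
    have e : C0 * (F + G) = C0 * Z + 4 * (C0 * c) * U := by rw [hFd, hZ]; ring
    rw [e, hcC] at hUb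
    linarith
  have hFZ : F ≤ Z + U := by
    have e : c * U ≤ 1 / 16 * U := mul_le_mul_of_nonneg_right hc16 hU0
    rw [hFd, hZ]; linarith only [e, hU0, hG0]
  -- spatial Hölder of ut
  set B := F + 1/2 * U with hBd
  have hB0 : 0 ≤ B := by positivity
  have hB : ∀ t ∈ Ioo 0 T, ∀ x y, |ut t x - ut t y| ≤ B * |x - y| ^ α := by
    intro t ht x y
    have e1 := hF t ht x y
    have e2 := hU t ht x y
    rw [hBd]
    rw [abs_le] at *
    constructor <;> linarith [e1.1, e1.2, e2.1, e2.2]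
  have htime := fun t s ht hs => time_reg T α U B hα0 hU0 hB0 u ut ux uxx hm hU hB t s ht hs
  have hpd1 : ∀ t x s y, Real.sqrt |t - s| ^ α ≤ pd t x s y ^ α := by
    intro t x s y
    apply Real.rpow_le_rpow (Real.sqrt_nonneg _) _ hα0.le
    unfold pd; linarith [abs_nonneg (x - y)]
  have hpd2 : ∀ t x s y, |x - y| ^ α ≤ pd t x s y ^ α := by
    intro t x s y
    apply Real.rpow_le_rpow (abs_nonneg _) _ hα0.le
    unfold pd; linarith [Real.sqrt_nonneg |t - s|]
  set V1 := 2 * U + 2 * B with hV1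
  set V := 2 * U + 3 * B with hV
  have hV10 : 0 ≤ V1 := by positivity
  have hV0 : 0 ≤ V := by positivity
  have hxx : ∀ t₁ ∈ Ioo (0:ℝ) T, ∀ t₂ ∈ Ioo (0:ℝ) T, ∀ x₁ x₂ : ℝ,
      |uxx t₁ x₁ - uxx t₂ x₂| ≤ (V1 + U) * pd t₁ x₁ t₂ x₂ ^ α := by
    intro t₁ h₁ t₂ h₂ x₁ x₂
    have e1 := ((htime t₁ t₂ h₁ h₂).1 x₁).trans
      (mul_le_mul_of_nonneg_left (hpd1 t₁ x₁ t₂ x₂) hV10)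
    have e2 := (hU t₂ h₂ x₁ x₂).trans (mul_le_mul_of_nonneg_left (hpd2 t₁ x₁ t₂ x₂) hU0)
    rw [abs_le] at *
    constructor <;> linarith [e1.1, e1.2, e2.1, e2.2]
  have hxt : ∀ t₁ ∈ Ioo (0:ℝ) T, ∀ t₂ ∈ Ioo (0:ℝ) T, ∀ x : ℝ,
      |ux t₁ x - ux t₂ x| ≤ (V * δ + 2 * (U * δ) + 12 * Y) * Real.sqrt |t₁ - t₂| ^ α := by
    intro t₁ h₁ t₂ h₂ x
    have e0 := (htime t₁ t₂ h₁ h₂).2 x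
    set τ := Real.sqrt |t₁ - t₂| with hτ
    have hτ0 : 0 ≤ τ := Real.sqrt_nonneg _
    have hτα : 0 ≤ τ ^ α := by positivity
    have hVδ : 0 ≤ V * δ := by positivity
    rcases le_or_gt τ δ with hl | hl
    · calc _ ≤ V * (τ * τ ^ α) := e0
        _ ≤ V * (δ * τ ^ α) := by gcongr
        _ = (V * δ) * τ ^ α := by ring
        _ ≤ _ := mul_le_mul_of_nonneg_right (by linarith) hτα
    · have a2 : q ≤ τ ^ α := Real.rpow_le_rpow hδ.le hl.le hα0.le
      have a3 : 1 ≤ τ ^ α / q := by rwa [le_div_iff₀ hq0, one_mul]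
      have a4 : |ux t₁ x - ux t₂ x| ≤ 2 * (U * q * δ + 6 * m / δ) := by
        have e1 := hI1 t₁ h₁ x
        have e2 := hI1 t₂ h₂ x
        rw [abs_le] at *
        constructor <;> linarith [e1.1, e1.2, e2.1, e2.2]
      calc _ ≤ 2 * (U * q * δ + 6 * m / δ) * 1 := by rw [mul_one]; exact a4
        _ ≤ 2 * (U * q * δ + 6 * m / δ) * (τ ^ α / q) := by gcongr
        _ = (2 * (U * δ) + 12 * Y) * τ ^ α := by rw [hY]; field_simp; ring
        _ ≤ _ := mul_le_mul_of_nonneg_right (by linarith) hτα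
  have hut : ∀ t₁ ∈ Ioo (0:ℝ) T, ∀ t₂ ∈ Ioo (0:ℝ) T, ∀ x₁ x₂ : ℝ,
      |ut t₁ x₁ - ut t₂ x₂| ≤ (P + 1/2 * (V1 + U) + (V + 6 * U + 34 * (E0 * W))) *
        pd t₁ x₁ t₂ x₂ ^ α := by
    intro t₁ h₁ t₂ h₂ x₁ x₂
    have hr : 0 ≤ pd t₁ x₁ t₂ x₂ ^ α := Real.rpow_nonneg (hpd0 _ _ _ _) _
    have e1 := hP t₁ (hsub _ h₁) t₂ (hsub _ h₂) x₁ x₂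
    have e2 := hxx t₁ h₁ t₂ h₂ x₁ x₂
    have a1 := (hxt t₁ h₁ t₂ h₂ x₁).trans
      (mul_le_mul_of_nonneg_left (hpd1 t₁ x₁ t₂ x₂) (by positivity))
    have a2 := (hI2 t₂ h₂ x₁ x₂).trans (mul_le_mul_of_nonneg_left (hpd2 t₁ x₁ t₂ x₂) (by positivity))
    have a3 : |ux t₁ x₁ - ux t₂ x₂| ≤ (V * δ + 5 * (U * δ) + 28 * Y) * pd t₁ x₁ t₂ x₂ ^ α := by
      rw [abs_le] at *
      constructor <;> linarith [a1.1, a1.2, a2.1, a2.2]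
    have e3 := prod_diff _ _ _ _ _ _ _ _ (hHs' t₁ (hsub _ h₁) x₁) (hI1' t₂ h₂ x₂)
      (hHh' t₁ (hsub _ h₁) t₂ (hsub _ h₂) x₁ x₂) a3
    have e4 : (H * (V * δ + 5 * (U * δ) + 28 * Y) + (U * δ + 6 * Y) * H) * pd t₁ x₁ t₂ x₂ ^ α ≤
        (V + 6 * U + 34 * (E0 * W)) * pd t₁ x₁ t₂ x₂ ^ α := by
      apply mul_le_mul_of_nonneg_right _ hr
      have b1 : H * (V * δ) ≤ c * V := by
        have := mul_le_mul_of_nonneg_right hHδ hV0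
        linarith only [this]
      have b2 : c * V ≤ 1 * V := by gcongr; linarith
      have b3 : c * U ≤ 1 * U := by gcongr; linarith
      linarith
    rw [abs_le] at *
    constructor <;> linarith [e1.1, e1.2, e2.1, e2.2, e3.1, e3.2]
  have f1 := hSemi_le T α _ hT hα0 (by positivity) uxx hm.memUxx hxx
  have f2 := hSemi_le T α _ hT hα0 (by positivity) ut hm.memUt hut
  have g1 : 22 * E0 * W ≤ Z := by rw [hZ]; linarith
  have g2 : P + 22 * E0 * W ≤ Z := by rw [hZ]; linarith
  have hEW : 0 ≤ E0 * W := by positivity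
  have g3 : hSemi T α ut + hSemi T α uxx ≤ (98 * C0 + 8) * Z := by
    have : hSemi T α ut + hSemi T α uxx ≤ 49/2 * U + 8 * Z := by linarith only [f1, f2, hV, hV1, hBd, hFZ, g2, hU0, hEW, g1, hZ0, hP0]
    linarith only [this, hUZ]
  refine g3.trans ?_
  rw [mul_assoc]
  apply mul_le_mul_of_nonneg_left _ (by positivity)
  have g4 : 0 ≤ 22 * E0 * (P + G) := by positivity
  rw [hZ]
  linarith only [g4, hW0]
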